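/- Let h be a real-valued C^3 function on a neighborhood of (0,0) in ℝ² with h(0,0) = 0, h_u(0,0) = 0, h_v(0,0) = 0, h_uu(0,0) = 0, h_uv(0,0) = −a with a ≠ 0, and h_vv(0,0) = 2 (so that the quadratic part of h at the origin is (−au + v)v, a nondegenerate saddle). Let ψ be a real-valued C^3 function on a neighborhood of 0 in ℝ with ψ(0) = 0 and ψ'(0) = a such that h(u, ψ(u)) = 0 for all u near 0 (ψ parametrizes the branch of h⁻¹(0) tangent to the line v = au). Then ψ''(0) = −(a₃₀ + 3a·a₂₁ + 3a²·a₁₂ + a³·a₀₃)/(3a), where a₃₀ = h_uuu(0,0), a₂₁ = h_uuv(0,0), a₁₂ = h_uvv(0,0), a₀₃ = h_vvv(0,0). -/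

import Mathlib

/-!
The function `u ↦ h (u, ψ u)` vanishes near `0`, so its third derivative at `0` is zero. By the
chain rule that third derivative is the third differential of `h` on `(1, ψ')`, plus
`3 ψ'' (h_uv + ψ' h_vv)`, plus `ψ''' h_v`. At a critical point the last term drops out, and what
remains is a linear equation for `ψ''`, solvable when the Hessian is nondegenerate: as `(1, ψ')` is
isotropic for the Hessian, it lies in the kernel exactly when `h_uv + ψ' h_vv = 0`. For the saddle
this number is `-a + 2 a = a`.
-/

noncomputable section

/-- Partial derivative with respect to the first variable `u`. -/
def pdu (f : ℝ × ℝ → ℝ) (p : ℝ × ℝ) : ℝ := fderiv ℝ f p (1, 0)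

/-- Partial derivative with respect to the second variable `v`. -/
def pdv (f : ℝ × ℝ → ℝ) (p : ℝ × ℝ) : ℝ := fderiv ℝ f p (0, 1)

open Filter Topology

theorem hasDerivAt_mul_of_eq_zero {𝕜 𝔸 : Type*} [NontriviallyNormedField 𝕜] [NormedRing 𝔸]
    [NormedAlgebra 𝕜 𝔸] {f g : 𝕜 → 𝔸} {f' : 𝔸} {x : 𝕜} (hf : HasDerivAt f f' x)
    (hfx : f x = 0) (hg : ContinuousAt g x) :
    HasDerivAt (fun t => f t * g t) (f' * g x) x := by
  rw [hasDerivAt_iff_tendsto_slope] at hf ⊢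
  refine (hf.mul (hg.tendsto.mono_left nhdsWithin_le_nhds)).congr fun t => ?_
  simp only [slope_def_module, hfx, zero_mul, sub_zero, smul_mul_assoc]

section PartialDerivatives

variable {f : ℝ × ℝ → ℝ} {p : ℝ × ℝ} {m n : WithTop ℕ∞}

theorem contDiffAt_pdu (hf : ContDiffAt ℝ n f p) (hmn : m + 1 ≤ n) :
    ContDiffAt ℝ m (pdu f) p :=
  (hf.fderiv_right hmn).clm_apply contDiffAt_const

theorem contDiffAt_pdv (hf : ContDiffAt ℝ n f p) (hmn : m + 1 ≤ n) :
    ContDiffAt ℝ m (pdv f) p :=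
  (hf.fderiv_right hmn).clm_apply contDiffAt_const

theorem pdu_pdv_eq_pdv_pdu (hf : ContDiffAt ℝ 2 f p) : pdu (pdv f) p = pdv (pdu f) p := by
  have hf' : DifferentiableAt ℝ (fderiv ℝ f) p :=
    (hf.fderiv_right (m := 1) (by norm_num)).differentiableAt one_ne_zero
  have fderiv_apply (v w : ℝ × ℝ) :
      fderiv ℝ (fun q => fderiv ℝ f q w) p v = fderiv ℝ (fderiv ℝ f) p v w := by
    simp [fderiv_clm_apply hf' (differentiableAt_const w)]
  calc pdu (pdv f) p = fderiv ℝ (fderiv ℝ f) p (1, 0) (0, 1) := fderiv_apply _ _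
    _ = fderiv ℝ (fderiv ℝ f) p (0, 1) (1, 0) := (hf.isSymmSndFDerivAt (by simp)) _ _
    _ = pdv (pdu f) p := (fderiv_apply _ _).symm

theorem pdu_pdv_pdv_eq_pdv_pdv_pdu (hf : ContDiffAt ℝ 3 f p) :
    pdu (pdv (pdv f)) p = pdv (pdv (pdu f)) p := by
  have hcomm : pdu (pdv f) =ᶠ[𝓝 p] pdv (pdu f) :=
    (hf.eventually (by simp)).mono fun q hq => pdu_pdv_eq_pdv_pdu (hq.of_le (by norm_num))
  calc pdu (pdv (pdv f)) p = pdv (pdu (pdv f)) p :=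
        pdu_pdv_eq_pdv_pdu (contDiffAt_pdv hf (by norm_num))
    _ = pdv (pdv (pdu f)) p := by rw [pdv, hcomm.fderiv_eq, ← pdv]

end PartialDerivatives

section Graph

variable {f : ℝ × ℝ → ℝ} {ψ : ℝ → ℝ} {x : ℝ}

theorem hasDerivAt_comp_graph (hf : DifferentiableAt ℝ f (x, ψ x))
    (hψ : DifferentiableAt ℝ ψ x) :
    HasDerivAt (fun t => f (t, ψ t)) (pdu f (x, ψ x) + deriv ψ x * pdv f (x, ψ x)) x := by
  have hgraph : HasDerivAt (fun t => (t, ψ t)) ((1 : ℝ), deriv ψ x) x :=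
    (hasDerivAt_id x).prodMk hψ.hasDerivAt
  have hdir : ((1 : ℝ), deriv ψ x) = (1, 0) + deriv ψ x • (0, 1) := by simp
  have hchain := hf.hasFDerivAt.comp_hasDerivAt x hgraph
  rwa [hdir, map_add, map_smul, smul_eq_mul] at hchain

theorem eventually_contDiffAt_graph {n : WithTop ℕ∞} (hn : n ≠ (⊤ : ℕ∞))
    (hf : ContDiffAt ℝ n f (x, ψ x)) (hψ : ContinuousAt ψ x) :
    ∀ᶠ t in 𝓝 x, ContDiffAt ℝ n f (t, ψ t) :=
  (continuousAt_id.prodMk hψ).eventually (hf.eventually hn)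

theorem deriv_deriv_comp_graph (hf : ContDiffAt ℝ 2 f (x, ψ x)) (hψ : ContDiffAt ℝ 2 ψ x) :
    deriv (deriv fun t => f (t, ψ t)) x =
      pdu (pdu f) (x, ψ x) + 2 * deriv ψ x * pdv (pdu f) (x, ψ x)
        + deriv ψ x ^ 2 * pdv (pdv f) (x, ψ x) + pdv f (x, ψ x) * deriv (deriv ψ) x := by
  have hderiv : deriv (fun t => f (t, ψ t)) =ᶠ[𝓝 x]
      fun t => pdu f (t, ψ t) + deriv ψ t * pdv f (t, ψ t) := by
    filter_upwards [eventually_contDiffAt_graph (by simp) hf hψ.continuousAt,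
      hψ.eventually (by simp)] with t hft hψt
    exact (hasDerivAt_comp_graph (hft.differentiableAt two_ne_zero)
      (hψt.differentiableAt two_ne_zero)).deriv
  have hψ₁ := hψ.differentiableAt two_ne_zero
  have hψ₂ : HasDerivAt (deriv ψ) (deriv (deriv ψ) x) x :=
    ((hψ.derivWithin (m := 1) (by norm_num)).differentiableAt one_ne_zero).hasDerivAt
  have hu := hasDerivAt_comp_graph
    ((contDiffAt_pdu (m := 1) hf (by norm_num)).differentiableAt one_ne_zero) hψ₁
  have hv := hasDerivAt_comp_graph
    ((contDiffAt_pdv (m := 1) hf (by norm_num)).differentiableAt one_ne_zero) hψ₁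
  rw [hderiv.deriv_eq, (hu.fun_add (hψ₂.fun_mul hv)).deriv, pdu_pdv_eq_pdv_pdu hf]
  ring

theorem deriv_deriv_deriv_comp_graph_of_pdv_eq_zero (hf : ContDiffAt ℝ 3 f (x, ψ x))
    (hψ : ContDiffAt ℝ 2 ψ x) (hv : pdv f (x, ψ x) = 0) :
    deriv (deriv (deriv fun t => f (t, ψ t))) x =
      pdu (pdu (pdu f)) (x, ψ x) + 3 * deriv ψ x * pdv (pdu (pdu f)) (x, ψ x)
        + 3 * deriv ψ x ^ 2 * pdv (pdv (pdu f)) (x, ψ x)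
        + deriv ψ x ^ 3 * pdv (pdv (pdv f)) (x, ψ x)
        + 3 * (pdv (pdu f) (x, ψ x) + deriv ψ x * pdv (pdv f) (x, ψ x)) * deriv (deriv ψ) x := by
  have hderiv₂ : deriv (deriv fun t => f (t, ψ t)) =ᶠ[𝓝 x] fun t =>
      pdu (pdu f) (t, ψ t) + 2 * deriv ψ t * pdv (pdu f) (t, ψ t)
        + deriv ψ t ^ 2 * pdv (pdv f) (t, ψ t) + pdv f (t, ψ t) * deriv (deriv ψ) t := by
    filter_upwards [eventually_contDiffAt_graph (by simp) hf hψ.continuousAt,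
      hψ.eventually (by simp)] with t hft hψt
    exact deriv_deriv_comp_graph (hft.of_le (by norm_num)) hψt
  have hψ' : ContDiffAt ℝ 1 (deriv ψ) x := hψ.derivWithin (by norm_num)
  have hψ₂ : HasDerivAt (deriv ψ) (deriv (deriv ψ) x) x :=
    (hψ'.differentiableAt one_ne_zero).hasDerivAt
  have hψ''_cont : ContinuousAt (deriv (deriv ψ)) x :=
    (hψ'.derivWithin (m := 0) (by norm_num)).continuousAt
  have hasDerivAt_graph {g : ℝ × ℝ → ℝ} (hg : ContDiffAt ℝ 1 g (x, ψ x)) :=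
    hasDerivAt_comp_graph (hg.differentiableAt one_ne_zero) (hψ.differentiableAt two_ne_zero)
  have hfu : ContDiffAt ℝ 2 (pdu f) (x, ψ x) := contDiffAt_pdu hf (by norm_num)
  have hfv : ContDiffAt ℝ 2 (pdv f) (x, ψ x) := contDiffAt_pdv hf (by norm_num)
  have huu := hasDerivAt_graph (contDiffAt_pdu hfu (by norm_num))
  have huv := hasDerivAt_graph (contDiffAt_pdv hfu (by norm_num))
  have hvv := hasDerivAt_graph (contDiffAt_pdv hfv (by norm_num))
  -- The factor `deriv (deriv ψ)` is merely continuous: the zero of `pdv f` makes up for this.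
  have hvψ'' := hasDerivAt_mul_of_eq_zero (hasDerivAt_graph (hfv.of_le (by norm_num))) hv hψ''_cont
  rw [hderiv₂.deriv_eq, (((huu.fun_add ((hψ₂.const_mul 2).fun_mul huv)).fun_add
    ((hψ₂.fun_pow 2).fun_mul hvv)).fun_add hvψ'').deriv, pdu_pdv_eq_pdv_pdu hfu,
    pdu_pdv_pdv_eq_pdv_pdv_pdu hf, pdu_pdv_eq_pdv_pdu (hf.of_le (by norm_num))]
  ring

end Graph

theorem stmt_13_general {h : ℝ × ℝ → ℝ} {ψ : ℝ → ℝ} {x y a c : ℝ}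
    (hh : ContDiffAt ℝ 3 h (x, y)) (hψ : ContDiffAt ℝ 2 ψ x) (hψx : ψ x = y)
    (hψ'x : deriv ψ x = a) (hlevel : ∀ᶠ t in 𝓝 x, h (t, ψ t) = c) (hv : pdv h (x, y) = 0)
    (hnondeg : pdv (pdu h) (x, y) + a * pdv (pdv h) (x, y) ≠ 0) :
    deriv (deriv ψ) x =
      -(pdu (pdu (pdu h)) (x, y) + 3 * a * pdv (pdu (pdu h)) (x, y)
          + 3 * a ^ 2 * pdv (pdv (pdu h)) (x, y) + a ^ 3 * pdv (pdv (pdv h)) (x, y))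
        / (3 * (pdv (pdu h) (x, y) + a * pdv (pdv h) (x, y))) := by
  subst hψx hψ'x
  have hzero : deriv (deriv (deriv fun t => h (t, ψ t))) x = 0 := by
    have hconst : (fun t => h (t, ψ t)) =ᶠ[𝓝 x] fun _ => c := hlevel
    simp [hconst.deriv.deriv.deriv_eq]
  rw [eq_div_iff (mul_ne_zero three_ne_zero hnondeg)]
  linear_combination hzero - deriv_deriv_deriv_comp_graph_of_pdv_eq_zero hh hψ hv

/-- at a saddle critical end point with quadratic part `(−au + v)v`, the
branch of `h⁻¹(0)` tangent to `v = au` satisfies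
`ψ''(0) = −(a₃₀ + 3a·a₂₁ + 3a²·a₁₂ + a³·a₀₃)/(3a)`. -/
theorem stmt_13 (U : Set (ℝ × ℝ)) (hU : U ∈ nhds ((0, 0) : ℝ × ℝ)) (h : ℝ × ℝ → ℝ)
    (hh : ContDiffOn ℝ 3 h U) (a : ℝ) (ha : a ≠ 0)
    (h00 : h (0, 0) = 0) (hu0 : pdu h (0, 0) = 0) (hv0 : pdv h (0, 0) = 0)
    (huu : pdu (pdu h) (0, 0) = 0) (huv : pdv (pdu h) (0, 0) = -a)
    (hvv : pdv (pdv h) (0, 0) = 2)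
    (ψ : ℝ → ℝ) (V : Set ℝ) (hV : V ∈ nhds (0 : ℝ))
    (hψC : ContDiffOn ℝ 3 ψ V) (hψ0 : ψ 0 = 0) (hψ'0 : deriv ψ 0 = a)
    (hbr : ∀ u ∈ V, h (u, ψ u) = 0) :
    deriv (deriv ψ) 0 =
      -(pdu (pdu (pdu h)) (0, 0) + 3 * a * pdv (pdu (pdu h)) (0, 0)
          + 3 * a ^ 2 * pdv (pdv (pdu h)) (0, 0)
          + a ^ 3 * pdv (pdv (pdv h)) (0, 0)) / (3 * a) := by
  have hnondeg : pdv (pdu h) (0, 0) + a * pdv (pdv h) (0, 0) = a := by rw [huv, hvv]; ring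
  simpa only [hnondeg] using stmt_13_general (hh.contDiffAt hU)
    ((hψC.contDiffAt hV).of_le (by norm_num)) hψ0 hψ'0 (eventually_of_mem hV hbr) hv0
    (hnondeg.trans_ne ha)
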